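/- Let U ⊆ ℝⁿ be open and φ : U → ℝ three times continuously differentiable with ∇²φ(y) positive definite on U; suppose g := ∇φ maps U bijectively onto an open set V with twice continuously differentiable inverse ψ, and define T_φ(y; w) := ½ (∇²φ(y))⁻¹ (∇³φ(y)[(∇²φ(y))⁻¹ w]) (∇²φ(y))⁻¹. Let c : ℝⁿ → ℝᵖ be continuously differentiable, y ∈ U, B := ∇c(y) with ‖B‖ ≤ M_c, Q := (∇²φ(y))⁻¹, and τ ≥ 0 a scalar; suppose ⟨v, BᵀQBv⟩ ≥ (σ_Q/2)‖v‖² for all v ∈ ℝᵖ with σ_Q > 0, and set d(y) := B(BᵀQB + τ I_p)⁻¹ c(y). Assume the segment [g(y), g(y) − d(y)] is contained in V and ‖T_φ(ψ(u); w)‖ ≤ L_T for every u on this segment and every unit vector w. Then ‖d(y)‖ ≤ (2M_c/σ_Q)‖c(y)‖ and ‖(y − (∇²φ(y))⁻¹ d(y)) − ψ(g(y) − d(y))‖ ≤ L_T‖d(y)‖² ≤ (4 L_T M_c² / σ_Q²)·‖c(y)‖². -/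

import Mathlib

/-!
With `A = BᵀQB + τI`, coercivity makes `A` invertible with `‖A⁻¹ c(y)‖ ≤ (2/σ_Q)‖c(y)‖`, whence
the bound on `d`. For the residual, the derivative of `ψ` at `u` is `(∇²φ(ψ u))⁻¹` by the chain
rule applied to `g ∘ ψ = id`, and differentiating operator inversion gives the second derivative
`w ↦ -2 T(ψ u; w)`. Along `u(t) = g(y) - t d`, the curve `t ↦ (∇²φ(ψ (u t)))⁻¹ d` therefore has
speed at most `2 L_T ‖d‖²` (`hasDerivAt_inverse_along`, `norm_apply_le_of_unit_bound`), and
integrating once more (`taylor_residual_le`) yields the remainder `L_T ‖d‖²`.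
-/

open scoped RealInnerProductSpace

section Helpers

variable {E : Type*} [NormedAddCommGroup E] [InnerProductSpace ℝ E]

lemma isUnit_of_inner_pos [FiniteDimensional ℝ E] (A : E →L[ℝ] E) (h : ∀ v, v ≠ 0 → 0 < ⟪v, A v⟫) : IsUnit A := by
  have hinj : Function.Injective A := by
    refine (injective_iff_map_eq_zero A).2 fun v hv => ?_
    by_contra hne
    have := h v hne
    simp [hv] at this
  rw [ContinuousLinearMap.isUnit_iff_bijective]
  exact ⟨hinj, LinearMap.surjective_of_injective (f := (A : E →ₗ[ℝ] E)) hinj⟩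

/-- The inverse of a coercive operator (a genuine inverse, since coercivity implies invertibility)
is bounded by the reciprocal of the coercivity constant. -/
lemma norm_inverse_apply_le [FiniteDimensional ℝ E] (A : E →L[ℝ] E) {s : ℝ} (hs : 0 < s)
    (h : ∀ v, s * ‖v‖ ^ 2 ≤ ⟪v, A v⟫) (b : E) : ‖Ring.inverse A b‖ ≤ s⁻¹ * ‖b‖ := by
  have hA : IsUnit A := isUnit_of_inner_pos A fun v hv =>
    lt_of_lt_of_le (by have := norm_pos_iff.2 hv; positivity) (h v)
  set v := Ring.inverse A b with hv
  have hAv : A v = b := by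
    have := congrArg (fun L : E →L[ℝ] E => L b) (Ring.mul_inverse_cancel A hA)
    simpa using this
  have h1 := h v
  rw [hAv] at h1
  have h2 := h1.trans (real_inner_le_norm v b)
  rcases (norm_nonneg v).eq_or_lt with h0 | h0
  · rw [← h0]; positivity
  · have h3 : s * ‖v‖ ≤ ‖b‖ := by
      refine le_of_mul_le_mul_left ?_ h0
      nlinarith
    rw [inv_mul_eq_div, le_div_iff₀ hs]
    linarith

/-- Homogeneity extends a bound on unit vectors to all vectors. -/
lemma norm_apply_le_of_unit_bound {F : Type*} [NormedAddCommGroup F] [NormedSpace ℝ F]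
    (S : E →ₗ[ℝ] F) {L : ℝ} (h : ∀ w, ‖w‖ = 1 → ‖S w‖ ≤ L) (d : E) : ‖S d‖ ≤ L * ‖d‖ := by
  rcases eq_or_ne d 0 with rfl | hd
  · simp
  · have h0 := norm_pos_iff.2 hd
    have h1 := h (‖d‖⁻¹ • d) (by rw [norm_smul, norm_inv, norm_norm, inv_mul_cancel₀ h0.ne'])
    rw [map_smul, norm_smul, norm_inv, norm_norm, inv_mul_le_iff₀ h0] at h1
    linarith

/-- The derivative formula of the inverse function theorem, for a right inverse already known to be
differentiable. -/
lemma hasFDerivAt_of_local_inverse {g ψ : E → E} {A : E →L[ℝ] E} {u : E} (hA : IsUnit A)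
    (hψ : DifferentiableAt ℝ ψ u) (hg : HasFDerivAt g A (ψ u))
    (h : ∀ᶠ v in nhds u, g (ψ v) = v) : HasFDerivAt ψ (Ring.inverse A) u := by
  have h1 : HasFDerivAt (g ∘ ψ) (A.comp (fderiv ℝ ψ u)) u := hg.comp u hψ.hasFDerivAt
  have h2 : HasFDerivAt (g ∘ ψ) (ContinuousLinearMap.id ℝ E) u :=
    (hasFDerivAt_id u).congr_of_eventuallyEq h
  have h3 : A * fderiv ℝ ψ u = 1 := h1.unique h2
  have h4 : Ring.inverse A = fderiv ℝ ψ u := by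
    rw [← mul_one (Ring.inverse A), ← h3, Ring.inverse_mul_cancel_left A _ hA]
  rw [h4]
  exact hψ.hasFDerivAt

/-- If a curve `x` in the domain moves with velocity `x'`, then `t ↦ (H (x t))⁻¹` has derivative
`-H⁻¹ (DH[x']) H⁻¹`. -/
lemma hasDerivAt_inverse_along [CompleteSpace E] {H : E → (E →L[ℝ] E)} {D : E →L[ℝ] (E →L[ℝ] E)}
    {x : ℝ → E} {x' : E} {t : ℝ} (hH : HasFDerivAt H D (x t)) (hu : IsUnit (H (x t)))
    (hx : HasDerivAt x x' t) :
    HasDerivAt (fun s => Ring.inverse (H (x s)))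
      (-((Ring.inverse (H (x t))).comp ((D x').comp (Ring.inverse (H (x t)))))) t := by
  obtain ⟨a, ha⟩ := hu
  have h1 : HasDerivAt (fun s => H (x s)) (D x') t := hH.comp_hasDerivAt t hx
  have h2 := hasFDerivAt_ringInverse (𝕜 := ℝ) a
  rw [ha] at h2
  have h3 := h2.comp_hasDerivAt t h1
  refine h3.congr_deriv ?_
  rw [← ha, Ring.inverse_unit]
  ext v
  simp

/-- Taylor's inequality of order two along `[0, 1]`, with the sharp factor `1/2`. -/
lemma taylor_residual_le {F : Type*} [NormedAddCommGroup F] [NormedSpace ℝ F]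
    {f f' f'' : ℝ → F} {K : ℝ}
    (hf : ∀ t ∈ Set.Icc (0 : ℝ) 1, HasDerivAt f (f' t) t)
    (hf' : ∀ t ∈ Set.Icc (0 : ℝ) 1, HasDerivAt f' (f'' t) t)
    (hK : ∀ t ∈ Set.Icc (0 : ℝ) 1, ‖f'' t‖ ≤ 2 * K) :
    ‖f 1 - f 0 - f' 0‖ ≤ K := by
  have h1 : ∀ t ∈ Set.Icc (0 : ℝ) 1, ‖f' t - f' 0‖ ≤ 2 * K * (t - 0) :=
    norm_image_sub_le_of_norm_deriv_le_segment' (fun t ht => (hf' t ht).hasDerivWithinAt)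
      fun t ht => hK t (Set.Ico_subset_Icc_self ht)
  have hd : ∀ t ∈ Set.Icc (0 : ℝ) 1,
      HasDerivAt (fun t => f t - f 0 - t • f' 0) (f' t - f' 0) t := fun t ht => by
    refine (((hf t ht).sub_const (f 0)).fun_sub
      ((hasDerivAt_id t).smul_const (f' 0))).congr_deriv ?_
    simp
  have hB : ∀ t : ℝ, HasDerivAt (fun t : ℝ => K * t ^ 2) (2 * K * (t - 0)) t := fun t => by
    refine ((hasDerivAt_pow 2 t).const_mul K).congr_deriv ?_
    norm_num
    ring
  have := image_norm_le_of_norm_deriv_right_le_deriv_boundary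
    (f := fun t => f t - f 0 - t • f' 0) (a := 0) (b := 1)
    (fun t ht => (hd t ht).continuousAt.continuousWithinAt)
    (fun t ht => (hd t (Set.Ico_subset_Icc_self ht)).hasDerivWithinAt)
    (by simp) hB (fun t ht => h1 t (Set.Ico_subset_Icc_self ht))
    (Set.right_mem_Icc.2 zero_le_one)
  simpa using this

end Helpers

/-- (Key inequality in the paper's Theorem 4.3.) The Bregman
proximal step `ψ(g(y) - d(y))` with `d(y) = B(BᵀQB + τI)⁻¹ c(y)`, `B = ∇c(y)`,
`Q = (∇²φ(y))⁻¹`, satisfies `‖d(y)‖ ≤ (2M_c/σ_Q)‖c(y)‖` and the residual bound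
`‖(y - (∇²φ(y))⁻¹ d(y)) - ψ(g(y) - d(y))‖ ≤ L_T‖d(y)‖² ≤ (4L_T M_c²/σ_Q²)‖c(y)‖²`. -/
theorem stmt18 {n p : ℕ}
    (U V : Set (EuclideanSpace ℝ (Fin n))) (hU : IsOpen U) (hV : IsOpen V)
    (φ : EuclideanSpace ℝ (Fin n) → ℝ)
    (g ψ : EuclideanSpace ℝ (Fin n) → EuclideanSpace ℝ (Fin n))
    (H : EuclideanSpace ℝ (Fin n) → (EuclideanSpace ℝ (Fin n) →L[ℝ] EuclideanSpace ℝ (Fin n)))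
    (D3 : EuclideanSpace ℝ (Fin n) →
      (EuclideanSpace ℝ (Fin n) →L[ℝ] (EuclideanSpace ℝ (Fin n) →L[ℝ] EuclideanSpace ℝ (Fin n))))
    (hg : ∀ z ∈ U, HasGradientAt φ (g z) z)
    (hH : ∀ z ∈ U, HasFDerivAt g (H z) z)
    (hD3 : ∀ z ∈ U, HasFDerivAt H (D3 z) z)
    (hD3c : ContinuousOn D3 U)
    (hHsa : ∀ z ∈ U, IsSelfAdjoint (H z))
    (hHpd : ∀ z ∈ U, ∀ v : EuclideanSpace ℝ (Fin n), v ≠ 0 → 0 < ⟪v, H z v⟫)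
    (hgV : Set.MapsTo g U V) (hψU : Set.MapsTo ψ V U)
    (hinv₁ : ∀ z ∈ U, ψ (g z) = z) (hinv₂ : ∀ v ∈ V, g (ψ v) = v)
    (hψ : ContDiffOn ℝ 2 ψ V)
    (T : EuclideanSpace ℝ (Fin n) → EuclideanSpace ℝ (Fin n) →
      (EuclideanSpace ℝ (Fin n) →L[ℝ] EuclideanSpace ℝ (Fin n)))
    (hT : ∀ z w, T z w = (2 : ℝ)⁻¹ •
      ((Ring.inverse (H z)).comp (((D3 z) ((Ring.inverse (H z)) w)).comp (Ring.inverse (H z)))))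
    (c : EuclideanSpace ℝ (Fin n) → EuclideanSpace ℝ (Fin p))
    (J : EuclideanSpace ℝ (Fin n) → (EuclideanSpace ℝ (Fin n) →L[ℝ] EuclideanSpace ℝ (Fin p)))
    (hc : ∀ z, HasFDerivAt c (J z) z) (hJcont : Continuous J)
    (y : EuclideanSpace ℝ (Fin n)) (hy : y ∈ U)
    (M_c σ_Q L_T τ : ℝ) (hσQ : 0 < σ_Q) (hτ : 0 ≤ τ)
    (hBn : ‖ContinuousLinearMap.adjoint (J y)‖ ≤ M_c)
    (hcoer : ∀ v : EuclideanSpace ℝ (Fin p),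
      σ_Q / 2 * ‖v‖ ^ 2 ≤
        ⟪v, (J y) ((Ring.inverse (H y)) ((ContinuousLinearMap.adjoint (J y)) v))⟫)
    (dv : EuclideanSpace ℝ (Fin n))
    (hdv : dv = (ContinuousLinearMap.adjoint (J y))
      (Ring.inverse ((J y).comp ((Ring.inverse (H y)).comp (ContinuousLinearMap.adjoint (J y))) +
        τ • (1 : EuclideanSpace ℝ (Fin p) →L[ℝ] EuclideanSpace ℝ (Fin p))) (c y)))
    (hseg : segment ℝ (g y) (g y - dv) ⊆ V)
    (hTL : ∀ u ∈ segment ℝ (g y) (g y - dv), ∀ w : EuclideanSpace ℝ (Fin n), ‖w‖ = 1 →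
      ‖T (ψ u) w‖ ≤ L_T) :
    ‖dv‖ ≤ 2 * M_c / σ_Q * ‖c y‖ ∧
    ‖(y - (Ring.inverse (H y)) dv) - ψ (g y - dv)‖ ≤ L_T * ‖dv‖ ^ 2 ∧
    L_T * ‖dv‖ ^ 2 ≤ 4 * L_T * M_c ^ 2 / σ_Q ^ 2 * ‖c y‖ ^ 2 := by
  have hM : 0 ≤ M_c := (norm_nonneg _).trans hBn
  have hd : ‖dv‖ ≤ 2 * M_c / σ_Q * ‖c y‖ := by
    rw [hdv]
    have h1 := norm_inverse_apply_le
      ((J y).comp ((Ring.inverse (H y)).comp (ContinuousLinearMap.adjoint (J y))) +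
        τ • (1 : EuclideanSpace ℝ (Fin p) →L[ℝ] EuclideanSpace ℝ (Fin p)))
      (half_pos hσQ) (fun v => by
        have h2 : 0 ≤ τ * ‖v‖ ^ 2 := by positivity
        have h3 := hcoer v
        simp only [add_apply, ContinuousLinearMap.comp_apply,
          smul_apply, one_apply_eq_self, inner_add_right,
          inner_smul_right, real_inner_self_eq_norm_sq]
        linarith) (c y)
    refine (ContinuousLinearMap.le_of_opNorm_le_of_le _ hBn h1).trans (le_of_eq ?_)
    field_simp
  refine ⟨hd, ?_, ?_⟩
  · have hunit : ∀ z ∈ U, IsUnit (H z) := fun z hz => isUnit_of_inner_pos _ (hHpd z hz)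
    have hmem : ∀ t ∈ Set.Icc (0 : ℝ) 1, g y - t • dv ∈ segment ℝ (g y) (g y - dv) := by
      intro t ht
      rw [segment_eq_image']
      exact ⟨t, ht, by simp [sub_eq_add_neg]⟩
    have hu : ∀ t : ℝ, HasDerivAt (fun s : ℝ => g y - s • dv) (-dv) t := fun t => by
      simpa using ((hasDerivAt_id t).smul_const dv).const_sub (g y)
    have hf : ∀ t ∈ Set.Icc (0 : ℝ) 1, HasDerivAt (fun s : ℝ => ψ (g y - s • dv))
        (Ring.inverse (H (ψ (g y - t • dv))) (-dv)) t := by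
      intro t ht
      have hv := hseg (hmem t ht)
      have hVn := hV.mem_nhds hv
      exact (hasFDerivAt_of_local_inverse (hunit _ (hψU hv))
        ((hψ.contDiffAt hVn).differentiableAt (by norm_num)) (hH _ (hψU hv))
        (Filter.eventually_of_mem hVn hinv₂)).comp_hasDerivAt t (hu t)
    have hf' : ∀ t ∈ Set.Icc (0 : ℝ) 1, HasDerivAt
        (fun s : ℝ => Ring.inverse (H (ψ (g y - s • dv))) (-dv))
        (-(2 : ℝ) • T (ψ (g y - t • dv)) (-dv) (-dv)) t := by
      intro t ht
      have hz := hψU (hseg (hmem t ht))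
      have h1 := (hasDerivAt_inverse_along (x := fun s : ℝ => ψ (g y - s • dv))
        (hD3 _ hz) (hunit _ hz) (hf t ht)).clm_apply (hasDerivAt_const t (-dv))
      refine h1.congr_deriv ?_
      rw [hT]
      simp
    have hK : ∀ t ∈ Set.Icc (0 : ℝ) 1,
        ‖-(2 : ℝ) • T (ψ (g y - t • dv)) (-dv) (-dv)‖ ≤ 2 * (L_T * ‖dv‖ ^ 2) := by
      intro t ht
      -- `T z` is only a function in the hypotheses; its formula shows that it is linear.
      let S : EuclideanSpace ℝ (Fin n) →ₗ[ℝ]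
          (EuclideanSpace ℝ (Fin n) →L[ℝ] EuclideanSpace ℝ (Fin n)) :=
        { toFun := T (ψ (g y - t • dv))
          map_add' := fun a b => by ext; simp [hT]
          map_smul' := fun r a => by ext; simp [hT]; ring }
      have h1 : ‖T (ψ (g y - t • dv)) (-dv)‖ ≤ L_T * ‖-dv‖ :=
        norm_apply_le_of_unit_bound S (hTL _ (hmem t ht)) (-dv)
      have h2 := ContinuousLinearMap.le_of_opNorm_le _ h1 (-dv)
      rw [norm_neg] at h2
      rw [norm_smul, norm_neg, Real.norm_ofNat]
      linarith
    have h := taylor_residual_le hf hf' hK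
    simp only [one_smul, zero_smul, sub_zero, hinv₁ y hy, map_neg] at h
    rw [← norm_neg] at h
    refine le_of_eq_of_le (congrArg norm ?_) h
    abel
  · rcases isEmpty_or_nonempty (Fin n) with hn | hn
    -- In dimension `n = 0` there are no unit vectors, so `L_T` has no sign; there coercivity
    -- forces `p = 0`, hence `c y = 0`.
    · have h1 := hcoer (c y)
      have h2 : ContinuousLinearMap.adjoint (J y) (c y) = 0 := Subsingleton.elim _ _
      rw [h2, map_zero, map_zero, inner_zero_right] at h1
      have h3 : ‖c y‖ ^ 2 = 0 := le_antisymm (by nlinarith) (by positivity)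
      have h4 : dv = 0 := Subsingleton.elim _ _
      simp [h3, h4]
    · have hL : 0 ≤ L_T := (norm_nonneg _).trans
        (hTL _ (left_mem_segment ℝ _ _) (EuclideanSpace.single hn.some 1) (by simp))
      have h1 : ‖dv‖ ^ 2 ≤ (2 * M_c / σ_Q * ‖c y‖) ^ 2 := by gcongr
      refine (mul_le_mul_of_nonneg_left h1 hL).trans (le_of_eq ?_)
      field_simp
      ring
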